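/- (Theorem 2, feasibility.) Assume the Neumann-measurement setting described in the context, with θ₁ ∈ [0, π/2). Assume additionally that there is a constant C with |φₙ′(0)| ≤ C √λₙ for all n and that λₙ ≥ c₀ n² for some c₀ > 0 and all n large. Let K ∈ ℝ^{1×N₀} and L ∈ ℝ^{N₀} be such that every complex eigenvalue μ of F₁ satisfies Re μ < −|c|, and fix α₁, α₂, α₃, α₄ > 0 with 𝔠 := 1 − ½(|c|/α₁ + 1/α₂ + 1/α₃ + |c|/α₄) > 0. Then there exists N₁ ≥ N₀ + 1 such that for every N ≥ N₁ there exist ε ∈ (0, 1/2], a symmetric positive definite matrix P, symmetric positive semidefinite matrices Q₁, Q₂, and reals r₁, r₂, β, γ > 0 satisfying Ψ ≺ 0, Θ₁ ≺ 0, Θ₂ ≺ 0, Θ₃ < 0, Θ₄ < 0, and Θ₅ > 0. -/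

import Mathlib

open Real Set Matrix MeasureTheory

noncomputable section

/-- One-sided/within derivative on the spatial interval `[0,1]`. -/
def dI (f : ℝ → ℝ) (x : ℝ) : ℝ := derivWithin f (Set.Icc 0 1) x

/-- `L²(0,1)` inner product. -/
def ip (f g : ℝ → ℝ) : ℝ := ∫ x in (0:ℝ)..1, f x * g x

/-- The lifting function `a(x) = (2p(x) + 2xp'(x) - x²q̃(x))/(cos θ₂ + 2 sin θ₂)`. -/
def aFun (p qt : ℝ → ℝ) (θ₂ : ℝ) (x : ℝ) : ℝ :=
  (2 * p x + 2 * x * dI p x - x ^ 2 * qt x) / (Real.cos θ₂ + 2 * Real.sin θ₂)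

/-- The lifting function `b(x) = -x²/(cos θ₂ + 2 sin θ₂)`. -/
def bFun (θ₂ : ℝ) (x : ℝ) : ℝ := -x ^ 2 / (Real.cos θ₂ + 2 * Real.sin θ₂)

/-- Input coefficient `βₙ = aₙ + (-λₙ + q_c) bₙ`. -/
def betaC (p qt : ℝ → ℝ) (θ₂ q_c : ℝ) (lam : ℕ → ℝ) (phi : ℕ → ℝ → ℝ) (n : ℕ) : ℝ :=
  ip (aFun p qt θ₂) (phi n) + (-lam n + q_c) * ip (bFun θ₂) (phi n)

/-- Squared `L²`-norm `‖R_N f‖² = Σ_{n≥N+1} ⟨f,φₙ⟩²` of the residual `R_N f`. -/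
def RN2 (f : ℝ → ℝ) (phi : ℕ → ℝ → ℝ) (N : ℕ) : ℝ := ∑' k : ℕ, (ip f (phi (N + 1 + k)))^2

/-- `A₀ = diag(-λ₁+q_c, …, -λ_{N₀}+q_c)`. -/
def A0 (N₀ : ℕ) (lam : ℕ → ℝ) (q_c : ℝ) : Matrix (Fin N₀) (Fin N₀) ℝ :=
  Matrix.diagonal fun i => -lam (i.val + 1) + q_c

/-- `F₃ = A₁ = diag(-λ_{N₀+1}+q_c, …, -λ_N+q_c)`. -/
def A1 (N₀ N : ℕ) (lam : ℕ → ℝ) (q_c : ℝ) : Matrix (Fin (N - N₀)) (Fin (N - N₀)) ℝ :=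
  Matrix.diagonal fun i => -lam (N₀ + i.val + 1) + q_c

/-- `𝔅₀ = (β₁,…,β_{N₀})ᵀ`. -/
def B0 (N₀ : ℕ) (p qt : ℝ → ℝ) (θ₂ q_c : ℝ) (lam : ℕ → ℝ) (phi : ℕ → ℝ → ℝ) :
    Fin N₀ → ℝ :=
  fun i => betaC p qt θ₂ q_c lam phi (i.val + 1)

/-- `F₁ = [[A₀+𝔅₀K, LC₀],[0, A₀-LC₀]]`. -/
def F1 (N₀ : ℕ) (lam : ℕ → ℝ) (q_c : ℝ) (B0v C0v K L : Fin N₀ → ℝ) :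
    Matrix (Fin N₀ ⊕ Fin N₀) (Fin N₀ ⊕ Fin N₀) ℝ :=
  Matrix.fromBlocks (A0 N₀ lam q_c + Matrix.vecMulVec B0v K) (Matrix.vecMulVec L C0v) 0
    (A0 N₀ lam q_c - Matrix.vecMulVec L C0v)

/-- `F₂ = [LC̃₁; -LC̃₁]`. -/
def F2 (N₀ N : ℕ) (L : Fin N₀ → ℝ) (Ct : Fin (N - N₀) → ℝ) :
    Matrix (Fin N₀ ⊕ Fin N₀) (Fin (N - N₀)) ℝ :=
  Matrix.of fun i j => Sum.elim (fun a' => L a' * Ct j) (fun a' => -(L a' * Ct j)) i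

/-- `ℒ = col(L,-L)`. -/
def Lv (N₀ : ℕ) (L : Fin N₀ → ℝ) : Fin N₀ ⊕ Fin N₀ → ℝ := Sum.elim L fun a' => -L a'

/-- `K̃ = [K 0]`. -/
def Kt (N₀ : ℕ) (K : Fin N₀ → ℝ) : Fin N₀ ⊕ Fin N₀ → ℝ := Sum.elim K 0

/-- Index type of the matrix `Ψ` (blocks of sizes `2N₀`, `N-N₀`, `1`). -/
abbrev SIdx (N₀ N : ℕ) := ((Fin N₀ ⊕ Fin N₀) ⊕ Fin (N - N₀)) ⊕ Unit

/-- The row vector `E = K̃ [F₁ F₂ ℒ]`. -/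
def Erow (N₀ N : ℕ) (F1m : Matrix (Fin N₀ ⊕ Fin N₀) (Fin N₀ ⊕ Fin N₀) ℝ)
    (F2m : Matrix (Fin N₀ ⊕ Fin N₀) (Fin (N - N₀)) ℝ)
    (Lvv Ktv : Fin N₀ ⊕ Fin N₀ → ℝ) : SIdx N₀ N → ℝ :=
  Sum.elim (Sum.elim (Matrix.vecMul Ktv F1m) (Matrix.vecMul Ktv F2m)) fun _ => Ktv ⬝ᵥ Lvv

/-- The matrix `Ψ` of the LMI conditions. -/
def PsiM (N₀ N : ℕ)
    (P Q1 F1m : Matrix (Fin N₀ ⊕ Fin N₀) (Fin N₀ ⊕ Fin N₀) ℝ)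
    (Q2 F3m : Matrix (Fin (N - N₀)) (Fin (N - N₀)) ℝ)
    (F2m : Matrix (Fin N₀ ⊕ Fin N₀) (Fin (N - N₀)) ℝ)
    (Lvv Ktv : Fin N₀ ⊕ Fin N₀ → ℝ) (E : SIdx N₀ N → ℝ)
    (c r₁ βs γ α₂ α₃ RNa2 RNb2 : ℝ) : Matrix (SIdx N₀ N) (SIdx N₀ N) ℝ :=
  Matrix.fromBlocks
    (Matrix.fromBlocks
      (F1mᵀ * P + P * F1m + |c| • P + Q1 + (α₂ * γ * RNa2) • Matrix.vecMulVec Ktv Ktv)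
      (P * F2m)
      ((P * F2m)ᵀ)
      (r₁ • ((2:ℝ) • F3m + |c| • (1 : Matrix (Fin (N - N₀)) (Fin (N - N₀)) ℝ)) + Q2))
    (Matrix.of fun i (_ : Unit) => Sum.elim (P.mulVec Lvv) (fun _ => 0) i)
    (Matrix.of fun (_ : Unit) j => Sum.elim (P.mulVec Lvv) (fun _ => 0) j)
    (Matrix.of fun _ _ => -βs)
  + (2 * α₃ * γ * RNb2) • Matrix.vecMulVec E E

/-- The matrix `Θ₁`. -/
def Theta1 (N₀ : ℕ) (P Q1 : Matrix (Fin N₀ ⊕ Fin N₀) (Fin N₀ ⊕ Fin N₀) ℝ)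
    (Ktv : Fin N₀ ⊕ Fin N₀ → ℝ) (c γ α₃ α₄ RNb2 : ℝ) :
    Matrix (Fin N₀ ⊕ Fin N₀) (Fin N₀ ⊕ Fin N₀) ℝ :=
  |c| • P - Q1 + ((2*α₃*|c| + α₄) * γ * |c| * RNb2) • Matrix.vecMulVec Ktv Ktv

/-- The matrix `Θ₂`. -/
def Theta2 (N₀ N : ℕ) (Q2 : Matrix (Fin (N - N₀)) (Fin (N - N₀)) ℝ) (r₁ c : ℝ) :
    Matrix (Fin (N - N₀)) (Fin (N - N₀)) ℝ :=
  (r₁ * |c|) • (1 : Matrix (Fin (N - N₀)) (Fin (N - N₀)) ℝ) - Q2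


/-- The square of the Frobenius norm dominates the square of the operator norm. -/
lemma dotProduct_mulVec_self_le {m n : Type*} [Fintype m] [Fintype n] (M : Matrix m n ℝ)
    (x : n → ℝ) :
    (M *ᵥ x) ⬝ᵥ (M *ᵥ x) ≤ (∑ i, ∑ j, M i j ^ 2) * (x ⬝ᵥ x) := by
  simp only [dotProduct, mulVec, Finset.sum_mul, ← pow_two]
  refine Finset.sum_le_sum fun i _ => ?_
  have h := Finset.sum_mul_sq_le_sq_mul_sq Finset.univ (M i) x
  rwa [Finset.sum_mul] at h

lemma dotProduct_sq_le {n : Type*} [Fintype n] (u x : n → ℝ) :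
    (u ⬝ᵥ x) ^ 2 ≤ (u ⬝ᵥ u) * (x ⬝ᵥ x) := by
  simpa only [dotProduct, ← pow_two] using Finset.sum_mul_sq_le_sq_mul_sq Finset.univ u x

lemma zero_le_dotProduct_self {n : Type*} [Fintype n] (x : n → ℝ) : 0 ≤ x ⬝ᵥ x :=
  Finset.sum_nonneg fun i _ => mul_self_nonneg (x i)

lemma zero_lt_dotProduct_self {n : Type*} [Fintype n] {x : n → ℝ} (hx : x ≠ 0) : 0 < x ⬝ᵥ x :=
  (zero_le_dotProduct_self x).lt_of_ne' fun h => hx (dotProduct_self_eq_zero.1 h)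

lemma dotProduct_vecMulVec_mulVec {n : Type*} [Fintype n] (u x : n → ℝ) :
    x ⬝ᵥ (vecMulVec u u *ᵥ x) = (u ⬝ᵥ x) ^ 2 := by
  rw [vecMulVec_mulVec, dotProduct_comm x]
  simp [smul_dotProduct, pow_two]

/-- The Cayley transform maps the open left half-plane into the open unit disc. -/
lemma norm_lt_one_of_mem_spectrum_cayley {R : Type*} [Ring R] [Algebra ℂ R] {a g : R}
    (hr : (a - 1) * g = 1) (hl : g * (a - 1) = 1) (ha : ∀ z ∈ spectrum ℂ a, z.re < 0)
    {z : ℂ} (hz : z ∈ spectrum ℂ ((a + 1) * g)) : ‖z‖ < 1 := by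
  have hg : IsUnit g := ⟨⟨g, a - 1, hl, hr⟩, rfl⟩
  rw [spectrum.mem_iff] at hz
  have key : algebraMap ℂ R z - (a + 1) * g
      = (algebraMap ℂ R z * (a - 1) - (a + 1)) * g := by
    rw [sub_mul, mul_assoc, hr, mul_one]
  rw [key] at hz
  have hz1 : z ≠ 1 := by
    rintro rfl
    apply hz
    refine IsUnit.mul ?_ hg
    have : algebraMap ℂ R 1 * (a - 1) - (a + 1) = algebraMap ℂ R (-2) := by
      rw [map_neg, map_one, map_ofNat, one_mul, ← one_add_one_eq_two]
      abel
    rw [this]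
    exact (IsUnit.mk0 (-2 : ℂ) (by norm_num)).map _
  have hz1' : z - 1 ≠ 0 := sub_ne_zero.2 hz1
  have hmem : (z + 1) / (z - 1) ∈ spectrum ℂ a := by
    rw [spectrum.mem_iff]
    intro hu
    apply hz
    refine IsUnit.mul ?_ hg
    have : algebraMap ℂ R z * (a - 1) - (a + 1) =
        algebraMap ℂ R (-(z - 1)) * (algebraMap ℂ R ((z + 1) / (z - 1)) - a) := by
      rw [mul_sub (algebraMap ℂ R (-(z - 1))), ← map_mul]
      have : -(z - 1) * ((z + 1) / (z - 1)) = -(z + 1) := by field_simp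
      rw [this]
      simp only [map_neg, map_sub, map_add, map_one]
      noncomm_ring
    rw [this]
    exact ((IsUnit.mk0 _ (neg_ne_zero.2 hz1')).map _).mul hu
  have h := ha _ hmem
  rw [Complex.div_re, ← add_div] at h
  have hn := Complex.normSq_pos.2 hz1'
  rw [div_lt_iff₀ hn, zero_mul] at h
  simp only [Complex.add_re, Complex.sub_re, Complex.one_re, Complex.add_im, Complex.sub_im,
    Complex.one_im] at h
  have h2 : ‖z‖ ^ 2 < 1 := by
    rw [← Complex.normSq_eq_norm_sq, Complex.normSq_apply]
    nlinarith
  nlinarith [norm_nonneg z]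

/-- A Banach algebra element with spectrum in the open unit disc has a power of norm `< 1`. -/
lemma exists_norm_pow_lt_one {R : Type*} [NormedRing R] [NormedAlgebra ℂ R] [CompleteSpace R]
    [Nontrivial R] {b : R} (hb : ∀ z ∈ spectrum ℂ b, ‖z‖ < 1) :
    ∃ m : ℕ, 1 ≤ m ∧ ‖b ^ m‖ < 1 := by
  have hρ : spectralRadius ℂ b < ((1 : NNReal) : ENNReal) :=
    spectrum.spectralRadius_lt_of_forall_lt b fun z hz => by exact_mod_cast hb z hz
  have ht := spectrum.pow_nnnorm_pow_one_div_tendsto_nhds_spectralRadius b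
  obtain ⟨m, hm, hm1⟩ := ((ht.eventually (gt_mem_nhds hρ)).and
    (Filter.eventually_ge_atTop 1)).exists
  refine ⟨m, hm1, ?_⟩
  by_contra! hcon
  have h1 : (1 : ENNReal) ≤ (‖b ^ m‖₊ : ENNReal) := by exact_mod_cast hcon
  have h2 := ENNReal.one_le_rpow h1 (z := 1 / (m : ℝ)) (by positivity)
  exact absurd hm (not_lt.2 (by simpa using h2))

open scoped Matrix.Norms.Frobenius in
/-- Lyapunov's theorem: a real matrix with spectrum in the open left half-plane admits a positive
definite `P` for which `AᵀP + PA` is negative definite. -/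
lemma exists_posDef_lyapunov {n : Type*} [Fintype n] [DecidableEq n] [Nonempty n]
    (A : Matrix n n ℝ)
    (hA : ∀ z ∈ spectrum ℂ (A.map (Complex.ofReal : ℝ → ℂ)), z.re < 0) :
    ∃ P : Matrix n n ℝ, P.PosDef ∧ ∃ s > 0, ∀ x : n → ℝ,
      x ⬝ᵥ ((Aᵀ * P + P * A) *ᵥ x) ≤ -s * (x ⬝ᵥ x) := by
  let φ : Matrix n n ℝ →+* Matrix n n ℂ := Complex.ofRealHom.mapMatrix
  have hnorm : ∀ M, ‖φ M‖ = ‖M‖ := fun M =>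
    frobenius_norm_map_eq M _ fun a => Complex.norm_real a
  have hdet : IsUnit (A - 1).det := by
    rw [isUnit_iff_ne_zero]
    intro h0
    have : (1 : ℂ) ∈ spectrum ℂ (φ A) := by
      rw [spectrum.mem_iff, Matrix.isUnit_iff_isUnit_det, isUnit_iff_ne_zero, not_not, map_one,
        ← neg_sub, det_neg, ← map_one φ, ← map_sub, ← RingHom.map_det, h0, map_zero, mul_zero]
    have := hA 1 this
    norm_num at this
  obtain ⟨G, hr, hl⟩ : ∃ G, (A - 1) * G = 1 ∧ G * (A - 1) = 1 :=
    ⟨_, mul_nonsing_inv _ hdet, nonsing_inv_mul _ hdet⟩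
  obtain ⟨m, hm1, hm⟩ : ∃ m : ℕ, 1 ≤ m ∧ ‖φ ((A + 1) * G) ^ m‖ < 1 := by
    refine exists_norm_pow_lt_one fun z hz => ?_
    rw [map_mul, map_add, map_one] at hz
    refine norm_lt_one_of_mem_spectrum_cayley (a := φ A) (g := φ G) ?_ ?_ hA hz
    · rw [← map_one φ, ← map_sub, ← map_mul, hr]
    · rw [← map_one φ, ← map_sub, ← map_mul, hl]
  rw [← map_pow, hnorm] at hm
  obtain ⟨B, hB⟩ : ∃ B, B = (A + 1) * G := ⟨_, rfl⟩
  rw [← hB] at hm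
  have hBA : B * (A - 1) = A + 1 := by rw [hB, mul_assoc, hl, mul_one]
  let f : ℝ := ∑ i, ∑ j, (B ^ m) i j ^ 2
  have hf : f < 1 := by
    have hf0 : 0 ≤ f := by positivity
    rw [frobenius_norm_def, ← Real.sqrt_eq_rpow] at hm
    have := (Real.sqrt_lt' one_pos).1 hm
    simpa [f] using this
  let g : ℝ := ∑ i, ∑ j, G i j ^ 2
  have hg0 : 0 ≤ g := by positivity
  let P : Matrix n n ℝ := ∑ k ∈ Finset.range m, (B ^ k)ᵀ * B ^ k
  have hP : P.PosDef := by
    obtain ⟨l, rfl⟩ := Nat.exists_eq_add_of_le' hm1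
    simp only [P, Finset.sum_range_succ']
    refine PosDef.posSemidef_add (posSemidef_sum _ fun k _ => ?_) ?_
    · simpa using posSemidef_conjTranspose_mul_self (B ^ (k + 1))
    · simpa using PosDef.one
  have hstein : P - Bᵀ * P * B = 1 - (B ^ m)ᵀ * B ^ m := by
    have h := Finset.sum_range_sub' (fun k => (B ^ k)ᵀ * B ^ k) m
    rw [Finset.sum_sub_distrib] at h
    simp only [pow_zero, transpose_one, mul_one] at h
    rw [← h]
    congr 1
    simp only [P, Finset.mul_sum, Finset.sum_mul]
    refine Finset.sum_congr rfl fun k _ => ?_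
    rw [pow_succ, transpose_mul (B ^ k) B]
    simp only [mul_assoc]
  have hlyap : (A - 1)ᵀ * (1 - (B ^ m)ᵀ * B ^ m) * (A - 1)
      = (-2 : ℝ) • (Aᵀ * P + P * A) := by
    have : (A - 1)ᵀ * (P - Bᵀ * P * B) * (A - 1)
        = (A - 1)ᵀ * P * (A - 1) - (B * (A - 1))ᵀ * P * (B * (A - 1)) := by
      rw [transpose_mul B]; noncomm_ring
    rw [← hstein, this, hBA]
    simp only [transpose_sub, transpose_add, transpose_one, neg_smul, two_smul]
    noncomm_ring
  refine ⟨P, hP, (1 - f) / (2 * (g + 1)), by have := sub_pos.2 hf; positivity, fun x => ?_⟩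
  have hx : x = G *ᵥ ((A - 1) *ᵥ x) := by rw [mulVec_mulVec, hl, one_mulVec]
  set w := (A - 1) *ᵥ x with hw
  have e1 : x ⬝ᵥ (((-2 : ℝ) • (Aᵀ * P + P * A)) *ᵥ x)
      = w ⬝ᵥ w - ((B ^ m) *ᵥ w) ⬝ᵥ ((B ^ m) *ᵥ w) := by
    rw [← hlyap, ← mulVec_mulVec, ← mulVec_mulVec, ← hw, mulVec_transpose, dotProduct_comm,
      ← dotProduct_mulVec, ← hw, sub_mulVec, one_mulVec, sub_dotProduct, ← mulVec_mulVec,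
      mulVec_transpose, ← dotProduct_mulVec]
  rw [smul_mulVec, dotProduct_smul, smul_eq_mul] at e1
  have e2 := dotProduct_mulVec_self_le (B ^ m) w
  have e3 := dotProduct_mulVec_self_le G w
  rw [← hx] at e3
  have hw0 := zero_le_dotProduct_self w
  have e4 : x ⬝ᵥ x ≤ (g + 1) * (w ⬝ᵥ w) := by
    change _ ≤ g * _ at e3
    linarith
  change _ ≤ f * _ at e2
  have e5 : (1 - f) / (2 * (g + 1)) * (x ⬝ᵥ x) ≤ (1 - f) / 2 * (w ⬝ᵥ w) := by
    have h1f := sub_pos.2 hf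
    calc _ ≤ (1 - f) / (2 * (g + 1)) * ((g + 1) * (w ⬝ᵥ w)) := by gcongr
      _ = _ := by field_simp
  linarith

/-- A symmetric real matrix whose quadratic form is negative off the origin is negative definite. -/
lemma neg_posDef_of_quadForm_neg {n : Type*} [Fintype n] {M : Matrix n n ℝ} (hM : Mᵀ = M)
    (h : ∀ x : n → ℝ, x ≠ 0 → x ⬝ᵥ (M *ᵥ x) < 0) : (-M).PosDef := by
  refine PosDef.of_dotProduct_mulVec_pos ?_ fun x hx => ?_
  · rw [IsHermitian, conjTranspose_eq_transpose_of_trivial, transpose_neg, hM]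
  · simpa [neg_mulVec] using h x hx

lemma posDef_transpose_eq {n : Type*} {P : Matrix n n ℝ} (hP : P.PosDef) : Pᵀ = P := by
  simpa using hP.isHermitian.eq

lemma transpose_vecMulVec_self {n : Type*} (u : n → ℝ) : (vecMulVec u u)ᵀ = vecMulVec u u :=
  transpose_vecMulVec u u

lemma PsiM_transpose (N₀ N : ℕ)
    (P Q1 F1m : Matrix (Fin N₀ ⊕ Fin N₀) (Fin N₀ ⊕ Fin N₀) ℝ)
    (Q2 F3m : Matrix (Fin (N - N₀)) (Fin (N - N₀)) ℝ)
    (F2m : Matrix (Fin N₀ ⊕ Fin N₀) (Fin (N - N₀)) ℝ)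
    (Lvv Ktv : Fin N₀ ⊕ Fin N₀ → ℝ) (E : SIdx N₀ N → ℝ)
    (c r₁ βs γ α₂ α₃ RNa2 RNb2 : ℝ)
    (hP : Pᵀ = P) (hQ1 : Q1ᵀ = Q1) (hQ2 : Q2ᵀ = Q2) (hF3 : F3mᵀ = F3m) :
    (PsiM N₀ N P Q1 F1m Q2 F3m F2m Lvv Ktv E c r₁ βs γ α₂ α₃ RNa2 RNb2)ᵀ =
      PsiM N₀ N P Q1 F1m Q2 F3m F2m Lvv Ktv E c r₁ βs γ α₂ α₃ RNa2 RNb2 := by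
  simp only [PsiM, transpose_add, transpose_smul, fromBlocks_transpose, transpose_vecMulVec_self,
    transpose_mul, transpose_transpose, transpose_one, hP, hQ1, hQ2, hF3]
  congr 2
  rw [add_comm (P * F1m)]

lemma quadForm_PsiM (N₀ N : ℕ)
    (P Q1 F1m : Matrix (Fin N₀ ⊕ Fin N₀) (Fin N₀ ⊕ Fin N₀) ℝ)
    (Q2 F3m : Matrix (Fin (N - N₀)) (Fin (N - N₀)) ℝ)
    (F2m : Matrix (Fin N₀ ⊕ Fin N₀) (Fin (N - N₀)) ℝ)
    (Lvv Ktv : Fin N₀ ⊕ Fin N₀ → ℝ) (E : SIdx N₀ N → ℝ)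
    (c r₁ βs γ α₂ α₃ RNa2 RNb2 : ℝ) (u : Fin N₀ ⊕ Fin N₀ → ℝ) (v : Fin (N - N₀) → ℝ) (z : ℝ) :
    (Sum.elim (Sum.elim u v) fun _ => z) ⬝ᵥ
      (PsiM N₀ N P Q1 F1m Q2 F3m F2m Lvv Ktv E c r₁ βs γ α₂ α₃ RNa2 RNb2 *ᵥ
        (Sum.elim (Sum.elim u v) fun _ => z)) =
      u ⬝ᵥ ((F1mᵀ * P + P * F1m + |c| • P + Q1) *ᵥ u) + α₂ * γ * RNa2 * (Ktv ⬝ᵥ u) ^ 2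
      + 2 * (u ⬝ᵥ ((P * F2m) *ᵥ v))
      + v ⬝ᵥ ((r₁ • ((2:ℝ) • F3m + |c| • (1 : Matrix (Fin (N - N₀)) (Fin (N - N₀)) ℝ)) + Q2) *ᵥ v)
      + 2 * z * ((P *ᵥ Lvv) ⬝ᵥ u) - βs * z ^ 2
      + 2 * α₃ * γ * RNb2 * (E ⬝ᵥ (Sum.elim (Sum.elim u v) fun _ => z)) ^ 2 := by
  have hcol : (Matrix.of fun i (_ : Unit) =>
      Sum.elim (P *ᵥ Lvv) (fun _ : Fin (N - N₀) => (0 : ℝ)) i) *ᵥ (fun _ => z)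
      = Sum.elim (z • (P *ᵥ Lvv)) 0 := by
    ext i
    rcases i with i | i <;> simp [mulVec, dotProduct, mul_comm]
  have hrow : (Matrix.of fun (_ : Unit) j =>
      Sum.elim (P *ᵥ Lvv) (fun _ : Fin (N - N₀) => (0 : ℝ)) j) *ᵥ (Sum.elim u v)
      = fun _ => (P *ᵥ Lvv) ⬝ᵥ u := by
    ext i
    simp [mulVec, dotProduct]
  have hcor : (Matrix.of fun (_ _ : Unit) => -βs) *ᵥ (fun _ => z) = fun _ => -βs * z := by
    ext i
    simp [mulVec, dotProduct]
  have hsym : v ⬝ᵥ ((P * F2m)ᵀ *ᵥ u) = u ⬝ᵥ ((P * F2m) *ᵥ v) := by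
    rw [mulVec_transpose, dotProduct_comm, ← dotProduct_mulVec]
  rw [PsiM, add_mulVec, dotProduct_add, smul_mulVec, dotProduct_smul,
    dotProduct_vecMulVec_mulVec, fromBlocks_mulVec]
  simp only [Sum.elim_comp_inl, Sum.elim_comp_inr, fromBlocks_mulVec, hcol, hrow, hcor]
  rw [add_mulVec _ ((α₂ * γ * RNa2) • vecMulVec Ktv Ktv)]
  simp only [sumElim_dotProduct_sumElim, dotProduct_add, hsym, smul_mulVec, dotProduct_smul,
    dotProduct_vecMulVec_mulVec, dotProduct_zero, smul_eq_mul]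
  have e1 : ∀ a b : ℝ, (fun _ : Unit => a) ⬝ᵥ (fun _ : Unit => b) = a * b := by
    simp [dotProduct]
  rw [e1, e1, dotProduct_comm u (P *ᵥ Lvv)]
  ring

/-- Negative definiteness of `Ψ` from a Lyapunov inequality for its first block, provided the
residual terms are small and `β`, `r₁κ` are large. -/
lemma neg_PsiM_posDef (N₀ N : ℕ)
    (P Q1 F1m : Matrix (Fin N₀ ⊕ Fin N₀) (Fin N₀ ⊕ Fin N₀) ℝ)
    (Q2 F3m : Matrix (Fin (N - N₀)) (Fin (N - N₀)) ℝ)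
    (F2m : Matrix (Fin N₀ ⊕ Fin N₀) (Fin (N - N₀)) ℝ)
    (Lvv Ktv : Fin N₀ ⊕ Fin N₀ → ℝ) (e₁ : Fin N₀ ⊕ Fin N₀ → ℝ) (e₂ : Fin (N - N₀) → ℝ) (e₃ : ℝ)
    (c r₁ βs γ α₂ α₃ RNa2 RNb2 s t : ℝ)
    (hP : Pᵀ = P) (hQ1 : Q1ᵀ = Q1) (hQ2 : Q2ᵀ = Q2) (hF3 : F3mᵀ = F3m) (hs : 0 < s)
    (hx : ∀ u, u ⬝ᵥ ((F1mᵀ * P + P * F1m + |c| • P + Q1) *ᵥ u) ≤ -s * (u ⬝ᵥ u))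
    (hy : ∀ v, v ⬝ᵥ ((r₁ • ((2:ℝ) • F3m
      + |c| • (1 : Matrix (Fin (N - N₀)) (Fin (N - N₀)) ℝ)) + Q2) *ᵥ v) ≤ -t * (v ⬝ᵥ v))
    (ha : 0 ≤ α₂ * γ * RNa2) (hak : α₂ * γ * RNa2 * (Ktv ⬝ᵥ Ktv) ≤ s / 8)
    (he : 0 ≤ 2 * α₃ * γ * RNb2) (he1 : 3 * (2 * α₃ * γ * RNb2) * (e₁ ⬝ᵥ e₁) ≤ s / 8)
    (he3 : 3 * (2 * α₃ * γ * RNb2) * e₃ ^ 2 ≤ 1)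
    (ht : 8 / s * (∑ i, ∑ j, (P * F2m) i j ^ 2) + 3 * (2 * α₃ * γ * RNb2) * (e₂ ⬝ᵥ e₂) < t)
    (hβ : 8 / s * ((P *ᵥ Lvv) ⬝ᵥ (P *ᵥ Lvv)) + 1 < βs) :
    (-(PsiM N₀ N P Q1 F1m Q2 F3m F2m Lvv Ktv (Sum.elim (Sum.elim e₁ e₂) fun _ => e₃)
      c r₁ βs γ α₂ α₃ RNa2 RNb2)).PosDef := by
  refine neg_posDef_of_quadForm_neg (PsiM_transpose _ _ _ _ _ _ _ _ _ _ _ _ _ _ _ _ _ _ _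
    hP hQ1 hQ2 hF3) fun w hw => ?_
  obtain ⟨u, v, z, rfl⟩ : ∃ u v z, w = Sum.elim (Sum.elim u v) fun _ => z :=
    ⟨fun i => w (.inl (.inl i)), fun i => w (.inl (.inr i)), w (.inr ()), by
      ext i; rcases i with (i | i) | i <;> rfl⟩
  rw [quadForm_PsiM]
  set a := α₂ * γ * RNa2
  set e := 2 * α₃ * γ * RNb2
  set f := ∑ i, ∑ j, (P * F2m) i j ^ 2
  have hE : (Sum.elim (Sum.elim e₁ e₂) fun _ : Unit => e₃) ⬝ᵥ (Sum.elim (Sum.elim u v) fun _ => z)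
      = e₁ ⬝ᵥ u + e₂ ⬝ᵥ v + e₃ * z := by
    simp [dotProduct]
  rw [hE]
  have hu0 := zero_le_dotProduct_self u
  have hv0 := zero_le_dotProduct_self v
  have young : ∀ x X Y : ℝ, 0 ≤ X → 0 ≤ Y → x ^ 2 ≤ X * Y → 2 * x ≤ s / 8 * X + 8 / s * Y := by
    intro x X Y hX hY h
    refine (abs_le_of_sq_le_sq' ?_ (by positivity)).2
    have h1 : s / 8 * X * (8 / s * Y) = X * Y := by field_simp
    nlinarith [sq_nonneg (s / 8 * X - 8 / s * Y)]
  have b1 := hx u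
  have b2 : a * (Ktv ⬝ᵥ u) ^ 2 ≤ s / 8 * (u ⬝ᵥ u) := by
    calc _ ≤ a * ((Ktv ⬝ᵥ Ktv) * (u ⬝ᵥ u)) := by gcongr; exact dotProduct_sq_le _ _
      _ = (a * (Ktv ⬝ᵥ Ktv)) * (u ⬝ᵥ u) := by ring
      _ ≤ _ := by gcongr
  have b3 : 2 * (u ⬝ᵥ ((P * F2m) *ᵥ v)) ≤ s / 8 * (u ⬝ᵥ u) + 8 / s * (f * (v ⬝ᵥ v)) := by
    refine young _ _ _ (zero_le_dotProduct_self _) (by positivity) ?_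
    exact (dotProduct_sq_le _ _).trans
      (mul_le_mul_of_nonneg_left (dotProduct_mulVec_self_le _ _) hu0)
  have b4 := hy v
  have b5 : 2 * z * ((P *ᵥ Lvv) ⬝ᵥ u)
      ≤ s / 8 * (u ⬝ᵥ u) + 8 / s * (((P *ᵥ Lvv) ⬝ᵥ (P *ᵥ Lvv)) * z ^ 2) := by
    rw [mul_assoc]
    refine young _ _ _ hu0
      (mul_nonneg (zero_le_dotProduct_self _) (sq_nonneg _)) ?_
    rw [mul_pow]
    have := mul_le_mul_of_nonneg_left (dotProduct_sq_le (P *ᵥ Lvv) u) (sq_nonneg z)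
    linarith
  have b6 : e * (e₁ ⬝ᵥ u + e₂ ⬝ᵥ v + e₃ * z) ^ 2
      ≤ s / 8 * (u ⬝ᵥ u) + 3 * e * (e₂ ⬝ᵥ e₂) * (v ⬝ᵥ v) + z ^ 2 := by
    have h1 : (e₁ ⬝ᵥ u + e₂ ⬝ᵥ v + e₃ * z) ^ 2
        ≤ 3 * ((e₁ ⬝ᵥ u) ^ 2 + (e₂ ⬝ᵥ v) ^ 2 + (e₃ * z) ^ 2) := by
      nlinarith [sq_nonneg (e₁ ⬝ᵥ u - e₂ ⬝ᵥ v), sq_nonneg (e₁ ⬝ᵥ u - e₃ * z),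
        sq_nonneg (e₂ ⬝ᵥ v - e₃ * z)]
    have h2 := dotProduct_sq_le e₁ u
    have h3 := dotProduct_sq_le e₂ v
    calc _ ≤ e * (3 * ((e₁ ⬝ᵥ e₁) * (u ⬝ᵥ u) + (e₂ ⬝ᵥ e₂) * (v ⬝ᵥ v) + (e₃ * z) ^ 2)) := by
          gcongr; linarith
      _ = 3 * e * (e₁ ⬝ᵥ e₁) * (u ⬝ᵥ u) + 3 * e * (e₂ ⬝ᵥ e₂) * (v ⬝ᵥ v)
          + 3 * e * e₃ ^ 2 * z ^ 2 := by ring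
      _ ≤ s / 8 * (u ⬝ᵥ u) + 3 * e * (e₂ ⬝ᵥ e₂) * (v ⬝ᵥ v) + 1 * z ^ 2 := by gcongr
      _ = _ := by ring
  have main : u ⬝ᵥ u ≠ 0 ∨ v ⬝ᵥ v ≠ 0 ∨ z ≠ 0 := by
    by_contra! hcon
    obtain ⟨h1, h2, rfl⟩ := hcon
    rw [dotProduct_self_eq_zero] at h1 h2
    subst h1 h2
    apply hw
    ext i
    rcases i with (i | i) | i <;> rfl
  have hc1 : 0 ≤ s / 2 * (u ⬝ᵥ u) := by positivity
  have hc2 : 0 ≤ (t - (8 / s * f + 3 * e * (e₂ ⬝ᵥ e₂))) * (v ⬝ᵥ v) :=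
    mul_nonneg (sub_pos.2 ht).le hv0
  have hc3 : 0 ≤ (βs - (8 / s * ((P *ᵥ Lvv) ⬝ᵥ (P *ᵥ Lvv)) + 1)) * z ^ 2 :=
    mul_nonneg (sub_pos.2 hβ).le (sq_nonneg _)
  have hpos : 0 < s / 2 * (u ⬝ᵥ u) + (t - (8 / s * f + 3 * e * (e₂ ⬝ᵥ e₂))) * (v ⬝ᵥ v)
      + (βs - (8 / s * ((P *ᵥ Lvv) ⬝ᵥ (P *ᵥ Lvv)) + 1)) * z ^ 2 := by
    rcases main with h | h | h
    · have : 0 < s / 2 * (u ⬝ᵥ u) := by have := hu0.lt_of_ne' h; positivity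
      linarith
    · have := mul_pos (sub_pos.2 ht) (hv0.lt_of_ne' h)
      linarith
    · have := mul_pos (sub_pos.2 hβ) (pow_pos (abs_pos.2 h) 2)
      rw [sq_abs] at this
      linarith
  linarith

/-- The tail of a real series tends to zero, with the index written as `N + 1 + k`. -/
lemma tendsto_tsum_tail (f : ℕ → ℝ) :
    Filter.Tendsto (fun N : ℕ => ∑' k : ℕ, f (N + 1 + k)) Filter.atTop (nhds 0) := by
  have h := (tendsto_sum_nat_add f).comp (Filter.tendsto_add_atTop_nat 1)
  refine h.congr fun N => ?_
  simp only [Function.comp_apply, add_comm]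

lemma eventually_mul_le_of_tendsto_zero {g : ℕ → ℝ} (hg : Filter.Tendsto g Filter.atTop (nhds 0))
    (A : ℝ) {δ : ℝ} (hδ : 0 < δ) : ∀ᶠ N in Filter.atTop, A * g N ≤ δ := by
  have h := hg.const_mul A
  rw [mul_zero] at h
  exact h.eventually_le_const hδ

lemma RN2_nonneg (f : ℝ → ℝ) (phi : ℕ → ℝ → ℝ) (N : ℕ) : 0 ≤ RN2 f phi N :=
  tsum_nonneg fun _ => sq_nonneg _

/-- Lyapunov's theorem for a matrix with spectrum to the left of `-δ`. -/
lemma exists_posDef_lyapunov_shift {n : Type*} [Fintype n] [DecidableEq n] [Nonempty n]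
    (F : Matrix n n ℝ) (δ : ℝ)
    (hF : ∀ z ∈ spectrum ℂ (F.map (Complex.ofReal : ℝ → ℂ)), z.re < -δ) :
    ∃ P : Matrix n n ℝ, P.PosDef ∧ ∃ s > 0, ∀ x : n → ℝ,
      x ⬝ᵥ ((Fᵀ * P + P * F + (2 * δ) • P) *ᵥ x) ≤ -s * (x ⬝ᵥ x) := by
  obtain ⟨P, hP, s, hs, h⟩ := exists_posDef_lyapunov (F + δ • (1 : Matrix n n ℝ)) fun z hz => by
    have hmap : (F + δ • (1 : Matrix n n ℝ)).map (Complex.ofReal : ℝ → ℂ)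
        = F.map (Complex.ofReal : ℝ → ℂ) + algebraMap ℂ (Matrix n n ℂ) δ := by
      ext i j
      by_cases hij : i = j <;> simp [algebraMap_matrix_apply, one_apply, hij]
    have hmem : z - δ ∈ spectrum ℂ (F.map (Complex.ofReal : ℝ → ℂ)) := by
      rw [spectrum.mem_iff] at hz ⊢
      convert hz using 2
      rw [hmap, map_sub]
      abel
    have := hF _ hmem
    simp only [Complex.sub_re, Complex.ofReal_re] at this
    linarith
  refine ⟨P, hP, s, hs, fun x => ?_⟩
  convert h x using 3
  simp only [transpose_add, transpose_smul, transpose_one, add_mul, mul_add, smul_mul_assoc,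
    mul_smul_comm, one_mul, mul_one, two_mul, add_smul]
  abel

/-- Theorem 2 (feasibility), Neumann measurement: with gains `K`, `L` placing all
eigenvalues of `F₁` in `{Re μ < -|c|}`, Young parameters with `𝔠 > 0`, and the trace/growth
bounds `|φₙ'(0)| ≤ C√λₙ` and `λₙ ≥ c₀ n²` (for large `n`), the constraints
`Ψ ≺ 0`, `Θ₁ ≺ 0`, `Θ₂ ≺ 0`, `Θ₃ < 0`, `Θ₄ < 0`, `Θ₅ > 0` are feasible (for some
`ε ∈ (0,1/2]`) for all `N` large enough. -/
theorem stmt_18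
    (θ₁ θ₂ : ℝ) (hθ₁ : θ₁ ∈ Set.Ico 0 (π/2)) (hθ₂ : θ₂ ∈ Set.Icc 0 (π/2))
    (p q qt : ℝ → ℝ) (q_c c : ℝ) (hc : c ≠ 0)
    (hp : ContDiffOn ℝ 2 p (Set.Icc 0 1)) (hppos : ∀ x ∈ Set.Icc (0:ℝ) 1, 0 < p x)
    (hqc : ContinuousOn q (Set.Icc 0 1)) (hqpos : ∀ x ∈ Set.Icc (0:ℝ) 1, 0 < q x)
    (hqt : ∀ x, qt x = q x - q_c)
    -- eigenstructure of the Sturm–Liouville operator A f = -(p f')' + q f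
    (lam : ℕ → ℝ) (phi : ℕ → ℝ → ℝ)
    (hlampos : ∀ n ≥ 1, 0 < lam n)
    (hlammono : ∀ n ≥ 1, lam n < lam (n+1))
    (hlamtop : Filter.Tendsto lam Filter.atTop Filter.atTop)
    (hphireg : ∀ n ≥ 1, ContDiffOn ℝ 2 (phi n) (Set.Icc 0 1))
    (hphieig : ∀ n ≥ 1, ∀ x ∈ Set.Icc (0:ℝ) 1,
      -(dI (fun y => p y * dI (phi n) y) x) + q x * phi n x = lam n * phi n x)
    (hphibc : ∀ n ≥ 1,
      Real.cos θ₁ * phi n 0 - Real.sin θ₁ * dI (phi n) 0 = 0 ∧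
      Real.cos θ₂ * phi n 1 + Real.sin θ₂ * dI (phi n) 1 = 0)
    (horth : ∀ m ≥ 1, ∀ n ≥ 1, ip (phi m) (phi n) = if m = n then 1 else 0)
    (hparseval : ∀ f : ℝ → ℝ, ContinuousOn f (Set.Icc 0 1) →
      (∫ x in (0:ℝ)..1, (f x)^2) = ∑' k : ℕ, (ip f (phi (k+1)))^2)
    -- additional assumptions: |φₙ'(0)| ≤ C √λₙ and λₙ ≥ c₀ n² for n large
    (hphibdd : ∃ C : ℝ, ∀ n ≥ 1, |dI (phi n) 0| ≤ C * Real.sqrt (lam n))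
    (hlamgrowth : ∃ c₀ > (0:ℝ), ∃ n₁ : ℕ, ∀ n ≥ n₁, c₀ * (n:ℝ)^2 ≤ lam n)
    -- dimensions and gains
    (N₀ : ℕ) (hN₀ : 1 ≤ N₀)
    (hspec : ∀ n ≥ N₀ + 1, -lam n + q_c + |c| < 0)
    (K L : Fin N₀ → ℝ)
    (F1m : Matrix (Fin N₀ ⊕ Fin N₀) (Fin N₀ ⊕ Fin N₀) ℝ)
    (hF1m : F1m = F1 N₀ lam q_c (B0 N₀ p qt θ₂ q_c lam phi)
      (fun i => dI (phi (i.val + 1)) 0) K L)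
    (hF1spec : ∀ μ : ℂ, μ ∈ spectrum ℂ (F1m.map (Complex.ofReal : ℝ → ℂ)) → μ.re < -|c|)
    -- Young parameters
    (α₁ α₂ α₃ α₄ cf : ℝ) (hα₁ : 0 < α₁) (hα₂ : 0 < α₂) (hα₃ : 0 < α₃) (hα₄ : 0 < α₄)
    (hcf : cf = 1 - (|c|/α₁ + 1/α₂ + 1/α₃ + |c|/α₄)/2) (hcfpos : 0 < cf) :
    ∃ N₁ : ℕ, N₀ + 1 ≤ N₁ ∧ ∀ N ≥ N₁,
      ∃ ε ∈ Set.Ioc (0:ℝ) (1/2),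
      ∃ (P Q1 : Matrix (Fin N₀ ⊕ Fin N₀) (Fin N₀ ⊕ Fin N₀) ℝ)
        (Q2 : Matrix (Fin (N - N₀)) (Fin (N - N₀)) ℝ) (r₁ r₂ βs γ : ℝ),
        P.PosDef ∧ Q1.PosSemidef ∧ Q2.PosSemidef ∧
        0 < r₁ ∧ 0 < r₂ ∧ 0 < βs ∧ 0 < γ ∧
        (-(PsiM N₀ N P Q1 F1m Q2 (A1 N₀ N lam q_c)
            (F2 N₀ N L
              (fun i => dI (phi (N₀ + i.val + 1)) 0 / lam (N₀ + i.val + 1)))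
            (Lv N₀ L) (Kt N₀ K)
            (Erow N₀ N F1m
              (F2 N₀ N L
                (fun i => dI (phi (N₀ + i.val + 1)) 0 / lam (N₀ + i.val + 1)))
              (Lv N₀ L) (Kt N₀ K))
            c r₁ βs γ α₂ α₃ (RN2 (aFun p qt θ₂) phi N) (RN2 (bFun θ₂) phi N))).PosDef ∧
        (-(Theta1 N₀ P Q1 (Kt N₀ K) c γ α₃ α₄ (RN2 (bFun θ₂) phi N))).PosDef ∧
        (-(Theta2 N₀ N Q2 r₁ c)).PosDef ∧
        γ * α₁ * |c| - r₂ < 0 ∧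
        2*γ*(-cf * lam (N+1) + q_c)
            + βs * (∑' k : ℕ,
                (dI (phi (N + 1 + k)) 0)^2 / lam (N + 1 + k) ^ ((3:ℝ)/2 + ε))
              * lam (N+1) ^ ((1:ℝ)/2 + ε)
            + r₂ / lam (N+1) < 0 ∧
        0 < 2*γ*cf - βs * (∑' k : ℕ,
              (dI (phi (N + 1 + k)) 0)^2 / lam (N + 1 + k) ^ ((3:ℝ)/2 + ε))
            / lam (N+1) ^ ((1:ℝ)/2 - ε) := by
  have : NeZero N₀ := ⟨by omega⟩
  obtain ⟨P, hP, s, hs, hlyap⟩ := exists_posDef_lyapunov_shift F1m |c| hF1spec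
  have hlam_le : ∀ n ≥ N₀ + 1, lam (N₀ + 1) ≤ lam n := fun n hn =>
    Nat.le_induction le_rfl (fun m hm ih => ih.trans (hlammono m (by omega)).le) n hn
  obtain ⟨κ, hκ⟩ : ∃ κ, κ = lam (N₀ + 1) - q_c - |c| := ⟨_, rfl⟩
  have hκ0 : 0 < κ := by linarith [hspec (N₀ + 1) le_rfl]
  have hc0 : 0 < |c| := abs_pos.2 hc
  set k := Kt N₀ K
  set l := Lv N₀ L
  obtain ⟨βs, hβ⟩ : ∃ βs, βs = 8 / (s / 2) * ((P *ᵥ l) ⬝ᵥ (P *ᵥ l)) + 2 := ⟨_, rfl⟩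
  have hβ0 : 0 < βs := by
    have := zero_le_dotProduct_self (P *ᵥ l)
    rw [hβ]
    positivity
  let M : ℕ → ℝ := fun N => ∑' j : ℕ,
    (dI (phi (N + 1 + j)) 0)^2 / lam (N + 1 + j) ^ ((3:ℝ)/2 + 1/2)
  have tM : Filter.Tendsto M Filter.atTop (nhds 0) :=
    tendsto_tsum_tail fun n => (dI (phi n) 0)^2 / lam n ^ ((3:ℝ)/2 + 1/2)
  have ta : Filter.Tendsto (fun N => RN2 (aFun p qt θ₂) phi N) Filter.atTop (nhds 0) :=
    tendsto_tsum_tail fun n => (ip (aFun p qt θ₂) (phi n))^2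
  have tb : Filter.Tendsto (fun N => RN2 (bFun θ₂) phi N) Filter.atTop (nhds 0) :=
    tendsto_tsum_tail fun n => (ip (bFun θ₂) (phi n))^2
  have tlam := (hlamtop.comp (Filter.tendsto_add_atTop_nat 1)).eventually_ge_atTop
    (1 + (2 * |q_c| + 2 * α₁ * |c|) / cf)
  have hs' : 0 < s / 2 / 8 := by positivity
  obtain ⟨N₁, hN₁⟩ := Filter.eventually_atTop.1
    ((eventually_mul_le_of_tendsto_zero ta (α₂ * (k ⬝ᵥ k)) hs').and <|
      (eventually_mul_le_of_tendsto_zero tb (6 * α₃ * ((k ᵥ* F1m) ⬝ᵥ (k ᵥ* F1m))) hs').and <|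
      (eventually_mul_le_of_tendsto_zero tb (6 * α₃ * (k ⬝ᵥ l) ^ 2) one_pos).and <|
      (eventually_mul_le_of_tendsto_zero tb
        ((2 * α₃ * |c| + α₄) * |c| * (k ⬝ᵥ k)) (δ := s / 4) (by positivity)).and <|
      (eventually_mul_le_of_tendsto_zero tM βs (δ := cf / 2) (by positivity)).and tlam)
  refine ⟨max N₁ (N₀ + 1), le_max_right _ _, fun N hN => ?_⟩
  obtain ⟨h1, h2, h3, h4, h5, h6⟩ := hN₁ N (le_trans (le_max_left _ _) hN)
  have hRa := RN2_nonneg (aFun p qt θ₂) phi N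
  have hRb := RN2_nonneg (bFun θ₂) phi N
  set Ra := RN2 (aFun p qt θ₂) phi N
  set Rb := RN2 (bFun θ₂) phi N
  set F := F2 N₀ N L (fun i => dI (phi (N₀ + i.val + 1)) 0 / lam (N₀ + i.val + 1))
  obtain ⟨t, ht⟩ : ∃ t, t = 8 / (s / 2) * (∑ i, ∑ j, (P * F) i j ^ 2)
      + 3 * (2 * α₃ * 1 * Rb) * ((k ᵥ* F) ⬝ᵥ (k ᵥ* F)) + 1 := ⟨_, rfl⟩
  have ht0 : 0 < t := by
    have := zero_le_dotProduct_self (k ᵥ* F)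
    rw [ht]
    positivity
  have hPt := posDef_transpose_eq hP
  obtain ⟨r₁, hr₁⟩ : ∃ r₁, r₁ = t / κ := ⟨_, rfl⟩
  have hr₁0 : 0 < r₁ := by rw [hr₁]; positivity
  have hrt : r₁ * κ = t := by rw [hr₁]; field_simp
  refine ⟨1 / 2, by norm_num, P, |c| • P + (s / 2) • (1 : Matrix _ _ ℝ),
    (r₁ * (|c| + κ)) • (1 : Matrix _ _ ℝ), r₁, 2 * α₁ * |c|, βs, 1, hP, ?_, ?_, hr₁0,
    by positivity, hβ0, one_pos, ?_, ?_, ?_, ?_, ?_, ?_⟩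
  · exact (hP.posSemidef.smul hc0.le).add (PosSemidef.one.smul (by positivity))
  · exact PosSemidef.one.smul (by positivity)
  · refine neg_PsiM_posDef N₀ N P _ F1m _ _ F l k (k ᵥ* F1m) (k ᵥ* F) (k ⬝ᵥ l) c r₁ βs 1 α₂ α₃
      Ra Rb (s / 2) t hPt ?_ ?_ ?_ (by positivity) ?_ ?_ (by positivity) ?_ (by positivity)
      ?_ ?_ ?_ ?_
    · simp [hPt]
    · simp
    · simp [A1]
    · intro u
      have h := hlyap u
      have e : F1mᵀ * P + P * F1m + |c| • P + (|c| • P + (s / 2) • (1 : Matrix _ _ ℝ))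
          = (F1mᵀ * P + P * F1m + (2 * |c|) • P) + (s / 2) • (1 : Matrix _ _ ℝ) := by
        rw [two_mul, add_smul]
        abel
      rw [e, add_mulVec, dotProduct_add, smul_mulVec, one_mulVec, dotProduct_smul, smul_eq_mul]
      linarith
    · intro v
      simp only [add_mulVec, smul_add, smul_mulVec, one_mulVec, dotProduct_add, dotProduct_smul,
        smul_eq_mul, A1]
      have h : v ⬝ᵥ ((diagonal fun i : Fin (N - N₀) => -lam (N₀ + i.val + 1) + q_c) *ᵥ v)
          ≤ (-|c| - κ) * (v ⬝ᵥ v) := by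
        simp only [dotProduct, mulVec_diagonal, Finset.mul_sum]
        refine Finset.sum_le_sum fun i _ => ?_
        have := hlam_le (N₀ + i.val + 1) (by omega)
        nlinarith [mul_self_nonneg (v i)]
      have := mul_le_mul_of_nonneg_left h hr₁0.le
      rw [← hrt]
      linarith
    · linarith
    · linarith
    · linarith
    · linarith
    · linarith
  · refine neg_posDef_of_quadForm_neg ?_ fun x hx => ?_
    · simp [Theta1]
    · have e : Theta1 N₀ P (|c| • P + (s / 2) • (1 : Matrix _ _ ℝ)) k c 1 α₃ α₄ Rb
          = ((2 * α₃ * |c| + α₄) * 1 * |c| * Rb) • vecMulVec k k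
            - (s / 2) • (1 : Matrix _ _ ℝ) := by
        rw [Theta1]
        abel
      rw [e, sub_mulVec, dotProduct_sub, smul_mulVec, smul_mulVec, one_mulVec, dotProduct_smul,
        dotProduct_smul, dotProduct_vecMulVec_mulVec, smul_eq_mul, smul_eq_mul]
      have hx0 := zero_lt_dotProduct_self hx
      have h := mul_le_mul_of_nonneg_left (dotProduct_sq_le k x)
        (show 0 ≤ (2 * α₃ * |c| + α₄) * 1 * |c| * Rb by positivity)
      have h' := mul_le_mul_of_nonneg_right h4 hx0.le
      have := mul_pos hs hx0
      linarith
  · have e : -(Theta2 N₀ N ((r₁ * (|c| + κ)) • (1 : Matrix _ _ ℝ)) r₁ c)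
        = (r₁ * κ) • (1 : Matrix _ _ ℝ) := by
      rw [Theta2, neg_sub, ← sub_smul]
      ring_nf
    rw [e]
    exact PosDef.one.smul (by positivity)
  · nlinarith [mul_pos hα₁ hc0]
  · change 2 * 1 * (-cf * lam (N + 1) + q_c) + βs * M N * lam (N + 1) ^ ((1:ℝ)/2 + 1/2)
      + 2 * α₁ * |c| / lam (N + 1) < 0
    have e : ((1:ℝ)/2 + 1/2) = 1 := by norm_num
    rw [e, Real.rpow_one]
    change _ ≤ lam (N + 1) at h6
    have hb : 0 ≤ (2 * |q_c| + 2 * α₁ * |c|) / cf := by positivity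
    have hl1 : 1 ≤ lam (N + 1) := by linarith
    have hl : 2 * |q_c| + 2 * α₁ * |c| < cf * lam (N + 1) := by
      have : (2 * |q_c| + 2 * α₁ * |c|) / cf < lam (N + 1) := by linarith
      rwa [div_lt_iff₀' hcfpos] at this
    have hd : 2 * α₁ * |c| / lam (N + 1) ≤ 2 * α₁ * |c| := div_le_self (by positivity) hl1
    have hm := mul_le_mul_of_nonneg_right h5 (zero_le_one.trans hl1)
    have hq := le_abs_self q_c
    have : 0 < cf * lam (N + 1) := by positivity
    linarith
  · change 0 < 2 * 1 * cf - βs * M N / lam (N + 1) ^ ((1:ℝ)/2 - 1/2)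
    rw [sub_self, Real.rpow_zero, div_one]
    linarith

end
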